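/- Proposition 2.6(iii) (average characteristic polynomial for the product ensemble). For every x ∈ ℝ, ∫_{(0,∞)^N} ∏_{l=1}^N (x−x_l) 𝒫_N(x₁,…,x_N) dx₁⋯dx_N = (−1)^N ∏_{l=1}^r Γ(ν_l+N+1) · ∫₀^∞ u^{ν₀} e^{−u} Ψ(u;x) ∏_{l=1}^N (u+a_l) du. -/

import Mathlib

open MeasureTheory Filter Topology

noncomputable section


/-- Pochhammer symbol `(a)_j` over `ℝ`. -/
def poch (a : ℝ) (j : ℕ) : ℝ := ∏ i ∈ Finset.range j, (a + i)

/-- The hypergeometric function `₀F₁(b; z)` for complex argument `z`. -/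
def hyp0F1 (b : ℝ) (z : ℂ) : ℂ :=
  ∑' k : ℕ, (Real.Gamma b : ℂ) * z ^ k /
    ((Nat.factorial k : ℂ) * (Real.Gamma (b + k) : ℂ))

/-- The hypergeometric function `₀F₁(b; z)` for real argument `z`. -/
def hyp0F1R (b z : ℝ) : ℝ :=
  ∑' k : ℕ, Real.Gamma b * z ^ k / (Nat.factorial k * Real.Gamma (b + k))

/-- The terminating hypergeometric sum `₁F₁(-k; b; u)`. -/
def hyp1F1T (k : ℕ) (b u : ℝ) : ℝ :=
  ∑ j ∈ Finset.range (k + 1),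
    poch (-(k : ℝ)) j / (poch b j * Nat.factorial j) * u ^ j

/-- The function `Ψ(u;x)` of the paper. -/
def Psi (r ν0 : ℕ) (ν : Fin r → ℕ) (u x : ℝ) : ℝ :=
  (1 / Real.Gamma ((ν0 : ℝ) + 1)) *
    ∑' k : ℕ, x ^ k / Nat.factorial k * hyp1F1T k ((ν0 : ℝ) + 1) u *
      ∏ l, 1 / Real.Gamma ((ν l : ℝ) + 1 + k)

/-- The positive orthant in `ℝ^r`. -/
def posOrth (r : ℕ) : Set (Fin r → ℝ) := {t | ∀ i, 0 < t i}

/-- The function `Φ(v;y)` of the paper, complex `v`. -/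
def Phi (r ν0 : ℕ) (ν : Fin r → ℕ) (v : ℂ) (y : ℝ) : ℂ :=
  ((1 / Real.Gamma ((ν0 : ℝ) + 1) : ℝ) : ℂ) *
    ∫ t in posOrth r,
      (((∏ i, (t i) ^ ((ν i : ℝ) - 1) * Real.exp (-t i)) *
          (y / ∏ i, t i) ^ ν0 * Real.exp (-(y / ∏ i, t i)) : ℝ) : ℂ) *
        hyp0F1 ((ν0 : ℝ) + 1) (-(v * ((y / ∏ i, t i : ℝ) : ℂ)))

/-- The function `Φ(v;y)` of the paper, real `v`. -/
def PhiR (r ν0 : ℕ) (ν : Fin r → ℕ) (v y : ℝ) : ℝ :=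
  (1 / Real.Gamma ((ν0 : ℝ) + 1)) *
    ∫ t in posOrth r,
      ((∏ i, (t i) ^ ((ν i : ℝ) - 1) * Real.exp (-t i)) *
          (y / ∏ i, t i) ^ ν0 * Real.exp (-(y / ∏ i, t i))) *
        hyp0F1R ((ν0 : ℝ) + 1) (-(v * (y / ∏ i, t i)))

/-- The double-contour-integral correlation kernel `K_N(x,y)` of Proposition 2.1,
with `C` the counterclockwise circle of center `c` and radius `R`. -/
def KN (r ν0 N : ℕ) (ν : Fin r → ℕ) (a : Fin N → ℝ) (c : ℂ) (R : ℝ) (x y : ℝ) : ℂ :=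
  ∫ u in Set.Ioi (0 : ℝ),
    (2 * Real.pi * Complex.I)⁻¹ *
      ∮ v in C(c, R),
        (u : ℂ) ^ ν0 * Complex.exp (-(u : ℂ) + v) * ((Psi r ν0 ν u x : ℝ) : ℂ) *
          Phi r ν0 ν v y * ((u : ℂ) - v)⁻¹ * ∏ l, ((u : ℂ) + (a l : ℂ)) / (v + (a l : ℂ))

/-- An admissible contour for `K_N`: a counterclockwise circle contained in the left
half-plane which encloses all the points `-a l`. -/
def AdmCircle (N : ℕ) (a : Fin N → ℝ) (c : ℂ) (R : ℝ) : Prop :=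
  0 < R ∧ c.re + R < 0 ∧ ∀ l, ‖-(a l : ℂ) - c‖ < R

/-- The Meijer G-function `G^{1,0}_{0,r+2}(—;0,-ν₀,…,-ν_r | z)`, complex argument. -/
def G1 (r ν0 : ℕ) (ν : Fin r → ℕ) (z : ℂ) : ℂ :=
  ∑' k : ℕ, (-z) ^ k /
    ((Nat.factorial k : ℂ) * (Real.Gamma ((ν0 : ℝ) + 1 + k) : ℂ) *
      ∏ l, (Real.Gamma ((ν l : ℝ) + 1 + k) : ℂ))

/-- The Meijer G-function `G^{1,0}_{0,r+2}(—;0,-ν₀,…,-ν_r | z)`, real argument. -/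
def G1R (r ν0 : ℕ) (ν : Fin r → ℕ) (z : ℝ) : ℝ :=
  ∑' k : ℕ, (-z) ^ k /
    (Nat.factorial k * Real.Gamma ((ν0 : ℝ) + 1 + k) *
      ∏ l, Real.Gamma ((ν l : ℝ) + 1 + k))

/-- `g₀(w) = ∑ (-1)^k w^{ν₀+k}/(k! Γ(ν₀+k+1))`, complex argument. -/
def g0C (ν0 : ℕ) (w : ℂ) : ℂ :=
  ∑' k : ℕ, (-1 : ℂ) ^ k * w ^ (ν0 + k) /
    ((Nat.factorial k : ℂ) * (Real.Gamma ((ν0 : ℝ) + k + 1) : ℂ))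

/-- `g₀(w)`, real argument. -/
def g0R (ν0 : ℕ) (w : ℝ) : ℝ :=
  ∑' k : ℕ, (-1 : ℝ) ^ k * w ^ (ν0 + k) /
    (Nat.factorial k * Real.Gamma ((ν0 : ℝ) + k + 1))

/-- The Meijer G-function `G^{r+1,0}_{0,r+2}(—;ν₀,…,ν_r,0 | z)` for `z > 0`, real form. -/
def G2R (r ν0 : ℕ) (ν : Fin r → ℕ) (z : ℝ) : ℝ :=
  ∫ t in posOrth r,
    (∏ l, (t l) ^ ((ν l : ℝ) - 1) * Real.exp (-t l)) * g0R ν0 (z / ∏ l, t l)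

/-- The critical hard-edge kernel `𝒦^{h,r}(ξ,η;τ)` of Theorem 1.2, the inner integral
running up the imaginary axis `v = i t`. -/
def Kcrit (r ν0 : ℕ) (ν : Fin r → ℕ) (G2 : ℂ → ℂ) (τ ξ η : ℝ) : ℂ :=
  (2 * Real.pi * Complex.I)⁻¹ *
    ∫ u in Set.Ioi (0 : ℝ), ∫ t : ℝ,
      ((u : ℂ) / (Complex.I * t)) ^ ν0 *
        Complex.exp (-(τ : ℂ) * u - (u : ℂ) ^ 2 / 2 + (τ : ℂ) * (Complex.I * t) +
          (Complex.I * t) ^ 2 / 2) *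
        ((u : ℂ) - Complex.I * t)⁻¹ * G1 r ν0 ν ((u * ξ : ℝ) : ℂ) *
        G2 (Complex.I * t * (η : ℂ)) * Complex.I

/-- The deformed critical kernel `𝒦^{h,r}_m(ξ,η;τ,σ)` of Theorem 1.3, the inner integral
running up the vertical line `Re v = -c`. -/
def KcritLine (r ν0 m : ℕ) (ν : Fin r → ℕ) (σ : ℕ → ℝ) (G2 : ℂ → ℂ) (c τ ξ η : ℝ) : ℂ :=
  (2 * Real.pi * Complex.I)⁻¹ *
    ∫ u in Set.Ioi (0 : ℝ), ∫ t : ℝ,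
      ((u : ℂ) / (-(c : ℂ) + Complex.I * t)) ^ ν0 *
        Complex.exp (-(τ : ℂ) * u - (u : ℂ) ^ 2 / 2 +
          (τ : ℂ) * (-(c : ℂ) + Complex.I * t) + (-(c : ℂ) + Complex.I * t) ^ 2 / 2) *
        ((u : ℂ) - (-(c : ℂ) + Complex.I * t))⁻¹ *
        (∏ j ∈ Finset.range m,
          ((u : ℂ) + (σ j : ℂ)) / ((-(c : ℂ) + Complex.I * t) + (σ j : ℂ))) *
        G1 r ν0 ν ((u * ξ : ℝ) : ℂ) * G2 ((-(c : ℂ) + Complex.I * t) * (η : ℂ)) * Complex.I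




/-- `Ψ(u;x)` in the case `r = 0`. -/
def Psi0 (ν0 : ℕ) (u x : ℝ) : ℝ :=
  Real.exp x * hyp0F1R ((ν0 : ℝ) + 1) (-(u * x)) / Real.Gamma ((ν0 : ℝ) + 1)

/-- `Φ(v;y)` in the case `r = 0`, complex `v`. -/
def Phi0 (ν0 : ℕ) (v : ℂ) (y : ℝ) : ℂ :=
  ((y ^ ν0 * Real.exp (-y) / Real.Gamma ((ν0 : ℝ) + 1) : ℝ) : ℂ) *
    hyp0F1 ((ν0 : ℝ) + 1) (-(v * (y : ℂ)))

/-- The kernel `K_N` in the case `r = 0`. -/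
def KN0 (ν0 N : ℕ) (a : Fin N → ℝ) (c : ℂ) (R : ℝ) (x y : ℝ) : ℂ :=
  ∫ u in Set.Ioi (0 : ℝ),
    (2 * Real.pi * Complex.I)⁻¹ *
      ∮ v in C(c, R),
        (u : ℂ) ^ ν0 * Complex.exp (-(u : ℂ) + v) * ((Psi0 ν0 u x : ℝ) : ℂ) *
          Phi0 ν0 v y * ((u : ℂ) - v)⁻¹ * ∏ l, ((u : ℂ) + (a l : ℂ)) / (v + (a l : ℂ))

/-- Laguerre polynomial `L_n^{ν}(x)`. -/
def laguerreL (n νp : ℕ) (x : ℝ) : ℝ :=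
  ∑ k ∈ Finset.range (n + 1),
    (-1 : ℝ) ^ k * (Nat.choose (n + νp) (n - k)) * x ^ k / Nat.factorial k

/-- The function `Ψ^{(μ)}(u;x)` of Section 4. -/
def PsiMu (r ν0 : ℕ) (μ ν : Fin r → ℕ) (u x : ℝ) : ℝ :=
  (1 / Real.Gamma ((ν0 : ℝ) + 1)) *
    ∑' k : ℕ, x ^ k / Nat.factorial k * hyp1F1T k ((ν0 : ℝ) + 1) u *
      ∏ l, Real.Gamma ((μ l : ℝ) + 1 + k) / Real.Gamma ((ν l : ℝ) + 1 + k)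

/-- The open unit cube in `ℝ^r`. -/
def unitCube (r : ℕ) : Set (Fin r → ℝ) := {t | ∀ i, 0 < t i ∧ t i < 1}

/-- The function `Φ^{(μ)}(v;y)` of Section 4, complex `v`. -/
def PhiMu (r ν0 : ℕ) (μ ν : Fin r → ℕ) (v : ℂ) (y : ℝ) : ℂ :=
  ((1 / (Real.Gamma ((ν0 : ℝ) + 1) * ∏ l, Real.Gamma ((μ l : ℝ) - (ν l : ℝ))) : ℝ) : ℂ) *
    ∫ t in unitCube r,
      (((∏ l, (t l) ^ ((ν l : ℝ) - 1) * (1 - t l) ^ ((μ l : ℝ) - (ν l : ℝ) - 1)) *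
          (y / ∏ l, t l) ^ ν0 * Real.exp (-(y / ∏ l, t l)) : ℝ) : ℂ) *
        hyp0F1 ((ν0 : ℝ) + 1) (-(v * ((y / ∏ l, t l : ℝ) : ℂ)))

/-- The function `Φ^{(μ)}(v;y)` of Section 4, real `v`. -/
def PhiMuR (r ν0 : ℕ) (μ ν : Fin r → ℕ) (v y : ℝ) : ℝ :=
  (1 / (Real.Gamma ((ν0 : ℝ) + 1) * ∏ l, Real.Gamma ((μ l : ℝ) - (ν l : ℝ)))) *
    ∫ t in unitCube r,
      ((∏ l, (t l) ^ ((ν l : ℝ) - 1) * (1 - t l) ^ ((μ l : ℝ) - (ν l : ℝ) - 1)) *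
          (y / ∏ l, t l) ^ ν0 * Real.exp (-(y / ∏ l, t l))) *
        hyp0F1R ((ν0 : ℝ) + 1) (-(v * (y / ∏ l, t l)))

/-- The kernel `K_N` for the truncated-unitary product of Section 4. -/
def KNmu (r ν0 N : ℕ) (μ ν : Fin r → ℕ) (a : Fin N → ℝ) (c : ℂ) (R : ℝ) (x y : ℝ) : ℂ :=
  ∫ u in Set.Ioi (0 : ℝ),
    (2 * Real.pi * Complex.I)⁻¹ *
      ∮ v in C(c, R),
        (u : ℂ) ^ ν0 * Complex.exp (-(u : ℂ) + v) * ((PsiMu r ν0 μ ν u x : ℝ) : ℂ) *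
          PhiMu r ν0 μ ν v y * ((u : ℂ) - v)⁻¹ * ∏ l, ((u : ℂ) + (a l : ℂ)) / (v + (a l : ℂ))

/-- Mixed domain `(0,1)^q × (0,∞)^{r-q}`. -/
def mixedSet (r q : ℕ) : Set (Fin r → ℝ) := {t | ∀ l, 0 < t l ∧ ((l : ℕ) < q → t l < 1)}

/-- The Meijer G-function `G^{1,q}_{q,r+2}(-μ₁,…,-μ_q; 0,-ν₀,…,-ν_r | z)`, real form. -/
def G1qR (r ν0 q : ℕ) (μ ν : Fin r → ℕ) (z : ℝ) : ℝ :=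
  ∑' k : ℕ, (-z) ^ k *
    (∏ l ∈ Finset.univ.filter fun l : Fin r => (l : ℕ) < q, Real.Gamma ((μ l : ℝ) + 1 + k)) /
    (Nat.factorial k * Real.Gamma ((ν0 : ℝ) + 1 + k) *
      ∏ l, Real.Gamma ((ν l : ℝ) + 1 + k))

/-- The Meijer G-function `G^{1,q}_{q,r+2}(-μ₁,…,-μ_q; 0,-ν₀,…,-ν_r | z)`, complex form. -/
def G1q (r ν0 q : ℕ) (μ ν : Fin r → ℕ) (z : ℂ) : ℂ :=
  ∑' k : ℕ, (-z) ^ k *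
    ((∏ l ∈ Finset.univ.filter fun l : Fin r => (l : ℕ) < q,
      Real.Gamma ((μ l : ℝ) + 1 + k) : ℝ) : ℂ) /
    ((Nat.factorial k : ℂ) * (Real.Gamma ((ν0 : ℝ) + 1 + k) : ℂ) *
      ∏ l, (Real.Gamma ((ν l : ℝ) + 1 + k) : ℂ))

/-- The Meijer G-function `G^{r+1,0}_{q,r+2}(μ₁,…,μ_q; ν₀,…,ν_r,0 | z)` for `z > 0`. -/
def G2qR (r ν0 q : ℕ) (μ ν : Fin r → ℕ) (z : ℝ) : ℝ :=
  ∫ t in mixedSet r q,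
    (∏ l : Fin r, if l.val < q then
        (t l) ^ ((ν l : ℝ) - 1) * (1 - t l) ^ ((μ l : ℝ) - (ν l : ℝ) - 1) /
          Real.Gamma ((μ l : ℝ) - (ν l : ℝ))
      else (t l) ^ ((ν l : ℝ) - 1) * Real.exp (-t l)) *
      g0R ν0 (z / ∏ l, t l)



/-!
In a biorthogonal ensemble with density proportional to `det (x_j ^ i) * det (ξ_i (x_j))`, the
product `∏ l, (z - x_l)` can be absorbed into the first determinant; Andréief's identity then gives
the average as a ratio of `N × N` determinants, which equals `p z` for the monic polynomial `p` of
degree `N` orthogonal to every `ξ_j`. To identify `p`, consider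
`W Q (x) = ∫ u > 0, u ^ ν₀ * exp (-u) * Ψ(u; x) * Q u`. It maps polynomials of degree `N` to
polynomials of degree `N`, and it is dual to `Φ`: `∫ x > 0, W Q (x) * Φ(v; x) = exp (-v) * Q v`.
Hence `W Q` for `Q = ∏ l, (u + a_l)` is orthogonal to every `ξ_j = Φ(-a_j; ·)`, and dividing by its
leading coefficient gives `p`. The duality is checked on monomials: `Φ` is a multiplicative
convolution with Gamma densities, so its moments factor into Gamma values, which cancel those in the
series of `Ψ`; what remains is an alternating sum of products of binomial coefficients.
-/

open scoped Nat

section MomentMatrix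

open Polynomial Matrix

variable {K : Type*} [Field K] {P : K[X]}

/-- The companion matrix of a monic polynomial `P`, acting on columns: multiplication by `X` on
`K[X]/(P)` in the basis `1, X, …, X ^ (P.natDegree - 1)`. -/
def companion (hP : P.Monic) : Matrix (Fin P.natDegree) (Fin P.natDegree) K :=
  Algebra.leftMulMatrix (AdjoinRoot.powerBasis' hP).basis (AdjoinRoot.powerBasis' hP).gen

lemma minpoly_gen_powerBasis' (hP : P.Monic) : minpoly K (AdjoinRoot.powerBasis' hP).gen = P := by
  rw [AdjoinRoot.powerBasis'_gen, AdjoinRoot.minpoly_root hP.ne_zero, hP.leadingCoeff, inv_one,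
    C_1, mul_one]

lemma companion_apply (hP : P.Monic) (i j : Fin P.natDegree) :
    companion hP i j =
      if (j : ℕ) + 1 = P.natDegree then -P.coeff i else if (i : ℕ) = j + 1 then 1 else 0 := by
  have hpoly : (AdjoinRoot.powerBasis' hP).minpolyGen = P := by
    rw [PowerBasis.minpolyGen_eq, minpoly_gen_powerBasis']
  refine (congrFun₂ (AdjoinRoot.powerBasis' hP).leftMulMatrix i j).trans ?_
  rw [hpoly]
  rfl

lemma charpoly_companion (hP : P.Monic) : (companion hP).charpoly = P :=
  (charpoly_leftMulMatrix _).trans (minpoly_gen_powerBasis' hP)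

lemma transpose_companion_mul_of (hP : P.Monic) {ι : Type*} (G : ℕ → ι → K)
    (hG : ∀ j, ∑ k ∈ Finset.range (P.natDegree + 1), P.coeff k * G k j = 0) :
    (companion hP)ᵀ * Matrix.of (fun (i : Fin P.natDegree) j => G i j) =
      Matrix.of fun (i : Fin P.natDegree) j => G (i + 1) j := by
  ext i j
  simp only [mul_apply, transpose_apply, companion_apply, of_apply]
  by_cases hi : (i : ℕ) + 1 = P.natDegree
  · have h := hG j
    rw [Finset.sum_range_succ, hP.coeff_natDegree, one_mul, Finset.sum_range] at h
    simp only [hi, if_true, neg_mul, Finset.sum_neg_distrib]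
    exact neg_eq_of_add_eq_zero_right h
  · have hlt : (i : ℕ) + 1 < P.natDegree := by omega
    rw [Finset.sum_eq_single ⟨i + 1, hlt⟩]
    · simp [hi]
    · intro k _ hk
      have hne : (k : ℕ) ≠ i + 1 := fun h => hk (Fin.ext h)
      simp [hi, hne]
    · simp

theorem det_mul_sub_succ (hP : P.Monic) (G : ℕ → Fin P.natDegree → K)
    (hG : ∀ j, ∑ k ∈ Finset.range (P.natDegree + 1), P.coeff k * G k j = 0) (z : K) :
    (Matrix.of fun i j : Fin P.natDegree => z * G i j - G (i + 1) j).det =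
      P.eval z * (Matrix.of fun i j : Fin P.natDegree => G i j).det := by
  have hfactor : (Matrix.of fun i j : Fin P.natDegree => z * G i j - G (i + 1) j) =
      (scalar _ z - companion hP)ᵀ * Matrix.of fun i j : Fin P.natDegree => G i j := by
    rw [transpose_sub, sub_mul, transpose_companion_mul_of hP G hG]
    ext i j
    simp
  rw [hfactor, det_mul, det_transpose, ← eval_charpoly, charpoly_companion]

end MomentMatrix

section Andreief

variable {ι 𝕜 : Type*} [Fintype ι] [DecidableEq ι] [RCLike 𝕜]

section

variable {α : ι → Type*} [∀ j, MeasurableSpace (α j)] {μ : ∀ j, Measure (α j)}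
  [∀ j, SigmaFinite (μ j)] {f : ∀ _ j : ι, α j → 𝕜}

lemma integrable_det_of_apply (hf : ∀ i j, Integrable (f i j) (μ j)) :
    Integrable (fun x => (Matrix.of fun i j => f i j (x j)).det) (Measure.pi μ) := by
  simp only [Matrix.det_apply', Matrix.of_apply]
  exact integrable_finsetSum _ fun σ _ =>
    (Integrable.fintype_prod_dep fun j => hf (σ j) j).const_mul _

lemma integral_det_of_apply (hf : ∀ i j, Integrable (f i j) (μ j)) :
    ∫ x, (Matrix.of fun i j => f i j (x j)).det ∂Measure.pi μ =
      (Matrix.of fun i j => ∫ y, f i j y ∂μ j).det := by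
  simp only [Matrix.det_apply', Matrix.of_apply]
  rw [integral_finsetSum _ fun σ _ =>
    (Integrable.fintype_prod_dep fun j => hf (σ j) j).const_mul _]
  refine Finset.sum_congr rfl fun σ _ => ?_
  rw [integral_const_mul, integral_fintype_prod_eq_prod fun j => f (σ j) j]

end

theorem integral_det_mul_det {α : Type*} [MeasurableSpace α] (μ : Measure α) [SigmaFinite μ]
    (f g : ι → α → 𝕜) (hfg : ∀ i j, Integrable (fun y => f i y * g j y) μ) :
    ∫ x : ι → α, (Matrix.of fun i j => f i (x j)).det * (Matrix.of fun i j => g i (x j)).det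
        ∂Measure.pi (fun _ => μ) =
      ((Fintype.card ι)! : 𝕜) * (Matrix.of fun i j => ∫ y, f i y * g j y ∂μ).det := by
  let G : Matrix ι ι 𝕜 := Matrix.of fun i j => ∫ y, f i y * g j y ∂μ
  have hexpand (x : ι → α) :
      (Matrix.of fun i j => f i (x j)).det * (Matrix.of fun i j => g i (x j)).det =
        ∑ τ : Equiv.Perm ι, ((Equiv.Perm.sign τ : ℤ) : 𝕜) *
          (Matrix.of fun i j => f i (x j) * g (τ j) (x j)).det := by
    rw [Matrix.det_apply' (Matrix.of fun i j => g i (x j)), Finset.mul_sum]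
    refine Finset.sum_congr rfl fun τ _ => ?_
    have := Matrix.det_mul_row (fun j => g (τ j) (x j)) (Matrix.of fun i j => f i (x j))
    simp only [Matrix.of_apply, mul_comm (g _ _)] at this ⊢
    rw [this]
    ring
  have hterm (τ : Equiv.Perm ι) : ((Equiv.Perm.sign τ : ℤ) : 𝕜) *
      ∫ x : ι → α, (Matrix.of fun i j => f i (x j) * g (τ j) (x j)).det ∂Measure.pi (fun _ => μ) =
        G.det := by
    have hsign : ((Equiv.Perm.sign τ : ℤ) : 𝕜) * ((Equiv.Perm.sign τ : ℤ) : 𝕜) = 1 := by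
      exact_mod_cast Int.units_coe_mul_self _
    rw [integral_det_of_apply (f := fun i j y => f i y * g (τ j) y) fun i j => hfg i (τ j)]
    change _ * (G.submatrix id τ).det = _
    rw [Matrix.det_permute', ← mul_assoc, hsign, one_mul]
  simp_rw [hexpand]
  rw [integral_finsetSum _ fun τ _ =>
    (integrable_det_of_apply (f := fun i j y => f i y * g (τ j) y)
      fun i j => hfg i (τ j)).const_mul _]
  simp_rw [integral_const_mul, hterm, Finset.sum_const, Finset.card_univ, Fintype.card_perm,
    nsmul_eq_mul]
  rfl

end Andreief

open Polynomial in
theorem integral_prod_sub_mul_det_mul_det {N : ℕ} {μ : Measure ℝ} [SigmaFinite μ] {P : ℝ[X]}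
    (hP : P.Monic) (hdeg : P.natDegree = N) (ξ : Fin N → ℝ → ℝ)
    (hξ : ∀ k j, Integrable (fun x => x ^ k * ξ j x) μ)
    (horth : ∀ j, ∫ x, P.eval x * ξ j x ∂μ = 0) (z : ℝ) :
    ∫ x : Fin N → ℝ, (∏ l, (z - x l)) *
        ((Matrix.of fun i j : Fin N => x j ^ (i : ℕ)).det *
          (Matrix.of fun i j => ξ i (x j)).det) ∂Measure.pi (fun _ => μ) =
      (N ! : ℝ) * (P.eval z *
        (Matrix.of fun i j : Fin N => ∫ x, x ^ (i : ℕ) * ξ j x ∂μ).det) := by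
  subst hdeg
  have hexpand (k : ℕ) (j : Fin P.natDegree) (y : ℝ) :
      (z - y) * y ^ k * ξ j y = z * (y ^ k * ξ j y) - y ^ (k + 1) * ξ j y := by ring
  have hint (k : ℕ) (j : Fin P.natDegree) : Integrable (fun y => (z - y) * y ^ k * ξ j y) μ :=
    (((hξ k j).const_mul z).sub (hξ (k + 1) j)).congr (.of_forall fun y => (hexpand k j y).symm)
  have hcoeff (j : Fin P.natDegree) :
      ∑ k ∈ Finset.range (P.natDegree + 1), P.coeff k * ∫ x, x ^ k * ξ j x ∂μ = 0 := by
    simp_rw [← horth j, eval_eq_sum_range, Finset.sum_mul, mul_assoc]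
    rw [integral_finsetSum _ fun k _ => (hξ k j).const_mul _]
    simp_rw [integral_const_mul]
  have habsorb (x : Fin P.natDegree → ℝ) :
      (∏ l, (z - x l)) * ((Matrix.of fun i j : Fin P.natDegree => x j ^ (i : ℕ)).det *
          (Matrix.of fun i j => ξ i (x j)).det) =
        (Matrix.of fun i j : Fin P.natDegree => (z - x j) * x j ^ (i : ℕ)).det *
          (Matrix.of fun i j => ξ i (x j)).det := by
    rw [← mul_assoc, ← Matrix.det_mul_row]
    rfl
  simp_rw [habsorb]
  rw [integral_det_mul_det μ (fun (i : Fin P.natDegree) y => (z - y) * y ^ (i : ℕ)) ξ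
      fun i j => hint i j, Fintype.card_fin,
    ← det_mul_sub_succ hP (fun k j => ∫ x, x ^ k * ξ j x ∂μ) hcoeff z]
  simp_rw [hexpand, integral_sub ((hξ _ _).const_mul z) (hξ _ _), integral_const_mul]

section BinomialSums

lemma sum_choose_mul_neg_one_pow_mul_choose_add (k n v : ℕ) :
    ∑ j ∈ Finset.range (k + 1), (k.choose j : ℝ) * ((-1) ^ j * (n + j).choose (v + j)) =
      (-1) ^ k * n.choose (v + k) := by
  induction k generalizing n v with
  | zero => simp
  | succ k ih =>
    have hshift : ∑ j ∈ Finset.range (k + 1),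
        (k.choose j : ℝ) * ((-1) ^ (j + 1) * (n + (j + 1)).choose (v + (j + 1))) =
          -((-1) ^ k * (n + 1).choose (v + k + 1)) := by
      rw [Nat.add_right_comm v k 1, ← ih (n + 1) (v + 1), ← Finset.sum_neg_distrib]
      refine Finset.sum_congr rfl fun j _ => ?_
      rw [Nat.add_right_comm n 1 j, Nat.add_right_comm v 1 j]
      ring_nf
    rw [Finset.sum_choose_succ_mul (fun j _ => (-1 : ℝ) ^ j * (n + j).choose (v + j)) k, ih,
      hshift, Nat.choose_succ_succ n (v + k), Nat.succ_eq_add_one]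
    push_cast
    ring_nf

lemma factorial_add_add_div (v p j : ℕ) :
    ((v + p + j)! : ℝ) / (v + j)! = p ! * (v + p + j).choose (v + j) := by
  rw [Nat.add_right_comm, Nat.cast_add_choose]
  field_simp

lemma sum_neg_one_pow_mul_choose_mul_choose (v p m : ℕ) :
    ∑ k ∈ Finset.range (p + 1),
        (-1 : ℝ) ^ k * ((v + p).choose (v + k) * (v + m + k).choose (v + m)) =
      (-1) ^ p * m.choose p := by
  have hterm (k : ℕ) (hk : k ≤ p) :
      (-1 : ℝ) ^ k * ((v + p).choose (v + k) * (v + m + k).choose (v + m)) =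
        ((v + p)! * m ! / (p ! * (v + m)!)) *
          (p.choose k * ((-1) ^ k * (v + m + k).choose (v + k))) := by
    obtain ⟨q, rfl⟩ := Nat.exists_eq_add_of_le hk
    rw [← add_assoc v k q, Nat.cast_add_choose, Nat.cast_add_choose, Nat.cast_add_choose,
      Nat.add_right_comm v m k, Nat.cast_add_choose]
    field_simp
  rw [Finset.sum_congr rfl fun k hk => hterm k (Nat.lt_succ_iff.mp (Finset.mem_range.mp hk)),
    ← Finset.mul_sum, sum_choose_mul_neg_one_pow_mul_choose_add]
  rcases lt_or_ge m p with hmp | hpm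
  · simp [Nat.choose_eq_zero_of_lt, hmp]
  · obtain ⟨q, rfl⟩ := Nat.exists_eq_add_of_le hpm
    rw [← add_assoc, Nat.cast_add_choose, Nat.cast_add_choose]
    field_simp

end BinomialSums

section DominatedSeries

variable {α E ι : Type*} [MeasurableSpace α] {μ : Measure α} [NormedAddCommGroup E]
  [CompleteSpace E] [Countable ι] {F : ι → α → E} {c : ι → ℝ} {g : α → ℝ}

lemma integrable_tsum_of_norm_le_mul (hF : ∀ k, AEStronglyMeasurable (F k) μ)
    (hbound : ∀ k, ∀ᵐ a ∂μ, ‖F k a‖ ≤ c k * g a) (hc : Summable c) (hg : Integrable g μ) :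
    Integrable (fun a => ∑' k, F k a) μ := by
  have hall := ae_all_iff.mpr hbound
  refine (hg.const_mul (∑' k, c k)).mono' ?_ ?_
  · refine aestronglyMeasurable_of_tendsto_ae atTop
      (f := fun s : Finset ι => fun a => ∑ k ∈ s, F k a)
      (fun s => Finset.aestronglyMeasurable_fun_sum s fun k _ => hF k) ?_
    filter_upwards [hall] with a ha
    exact (Summable.of_norm_bounded (hc.mul_right (g a)) ha).hasSum
  · filter_upwards [hall] with a ha
    exact tsum_of_norm_bounded (hc.hasSum.mul_right (g a)) ha

lemma hasSum_integral_of_norm_le_mul [NormedSpace ℝ E] (hF : ∀ k, AEStronglyMeasurable (F k) μ)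
    (hbound : ∀ k, ∀ᵐ a ∂μ, ‖F k a‖ ≤ c k * g a) (hc : Summable c) (hg : Integrable g μ) :
    HasSum (fun k => ∫ a, F k a ∂μ) (∫ a, ∑' k, F k a ∂μ) := by
  refine hasSum_integral_of_dominated_convergence (fun k a => c k * g a) hF hbound
    (.of_forall fun a => hc.mul_right (g a)) ?_ ?_
  · simpa only [tsum_mul_right] using hg.const_mul (∑' k, c k)
  · filter_upwards [ae_all_iff.mpr hbound] with a ha
    exact (Summable.of_norm_bounded (hc.mul_right (g a)) ha).hasSum

end DominatedSeries

section Exponential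

lemma hasSum_pow_div_factorial_mul_choose (a : ℝ) (p : ℕ) :
    HasSum (fun m => a ^ m / m ! * m.choose p) (Real.exp a * a ^ p / p !) := by
  have hexp : HasSum (fun m => a ^ m / m !) (Real.exp a) := by
    rw [Real.exp_eq_exp_ℝ]
    exact NormedSpace.expSeries_div_hasSum_exp a
  have hzero : ∑ m ∈ Finset.range p, a ^ m / m ! * (m.choose p : ℝ) = 0 :=
    Finset.sum_eq_zero fun m hm => by
      simp [Nat.choose_eq_zero_of_lt (Finset.mem_range.mp hm)]
  rw [← hasSum_nat_add_iff' p, hzero, sub_zero, mul_div_assoc]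
  refine (hexp.mul_right (a ^ p / p !)).congr_fun fun m => ?_
  rw [Nat.add_comm m p, Nat.cast_add_choose, pow_add]
  field_simp

lemma pow_le_factorial_mul_exp {b s : ℝ} (hb : 0 < b) (hs : 0 ≤ s) (k : ℕ) :
    s ^ k ≤ b ^ k * k ! * Real.exp (s / b) := by
  have h := Real.pow_div_factorial_le_exp (s / b) (by positivity) k
  rw [div_pow, div_div, div_le_iff₀ (by positivity)] at h
  linarith

lemma exp_neg_mul_exp_half (s : ℝ) :
    Real.exp (-s) * Real.exp (s / 2) = Real.exp (-(2⁻¹ * s)) := by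
  rw [← Real.exp_add]
  ring_nf

lemma integrableOn_pow_mul_exp_neg_mul (n : ℕ) {b : ℝ} (hb : 0 < b) :
    IntegrableOn (fun u : ℝ => u ^ n * Real.exp (-(b * u))) (Set.Ioi 0) := by
  have h := integrableOn_rpow_mul_exp_neg_mul_rpow (s := n) (p := 1) (b := b)
    (by linarith [n.cast_nonneg (α := ℝ)]) one_pos hb
  simpa using h

lemma integral_pow_mul_exp_neg (n : ℕ) :
    ∫ u in Set.Ioi (0 : ℝ), u ^ n * Real.exp (-u) = n ! := by
  rw [← Real.Gamma_nat_eq_factorial, Real.Gamma_eq_integral (by positivity)]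
  simp [mul_comm]

lemma Gamma_natCast_add_one_add (n k : ℕ) : Real.Gamma ((n : ℝ) + 1 + k) = (n + k)! := by
  rw [← Real.Gamma_nat_eq_factorial]
  congr 1
  push_cast
  ring

end Exponential

section MultiplicativeConvolution

/-- The convolution over the multiplicative group `(0, ∞)` of a function `K` with the weights
`w l`, not normalised by the Haar density `1 / t`. -/
def mulConvolution {r : ℕ} (w : Fin r → ℝ → ℝ) (K : ℝ → ℝ) (x : ℝ) : ℝ :=
  ∫ t in posOrth r, (∏ l, w l (t l)) * K (x / ∏ l, t l)

lemma posOrth_eq_pi (r : ℕ) : posOrth r = Set.univ.pi fun _ => Set.Ioi 0 := by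
  ext t
  simp [posOrth]

lemma measurableSet_posOrth (r : ℕ) : MeasurableSet (posOrth r) :=
  posOrth_eq_pi r ▸ MeasurableSet.univ_pi fun _ => measurableSet_Ioi

lemma volume_restrict_posOrth (r : ℕ) :
    (volume : Measure (Fin r → ℝ)).restrict (posOrth r) =
      Measure.pi fun _ => (volume : Measure ℝ).restrict (Set.Ioi 0) := by
  rw [← Measure.restrict_pi_pi, ← posOrth_eq_pi, volume_pi]

lemma integral_Ioi_pow_mul_comp_div (K : ℝ → ℝ) (i : ℕ) {T : ℝ} (hT : 0 < T) :
    ∫ x in Set.Ioi (0 : ℝ), x ^ i * K (x / T) =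
      T ^ (i + 1) * ∫ s in Set.Ioi (0 : ℝ), s ^ i * K s := by
  have h := integral_comp_mul_left_Ioi (fun s => (T * s) ^ i * K s) 0 (inv_pos.mpr hT)
  simp_rw [mul_inv_cancel_left₀ hT.ne', inv_mul_eq_div, inv_inv, zero_div, mul_pow, mul_assoc,
    integral_const_mul, smul_eq_mul] at h
  rw [h, pow_succ', mul_assoc]

lemma integrableOn_Ioi_pow_mul_comp_div {K : ℝ → ℝ} {i : ℕ} {T : ℝ} (hT : 0 < T)
    (hK : IntegrableOn (fun s => s ^ i * K s) (Set.Ioi 0)) :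
    IntegrableOn (fun x => x ^ i * K (x / T)) (Set.Ioi 0) := by
  have h := integrableOn_Ioi_comp_mul_left_iff (fun s => (T * s) ^ i * K s) 0 (inv_pos.mpr hT)
  simp_rw [mul_inv_cancel_left₀ hT.ne', inv_mul_eq_div, zero_div, mul_pow, mul_assoc] at h
  exact h.mpr (hK.const_mul _)

variable {r : ℕ} {w : Fin r → ℝ → ℝ} {K : ℝ → ℝ} {i : ℕ}

lemma pow_mul_mulConvolution (w : Fin r → ℝ → ℝ) (K : ℝ → ℝ) (i : ℕ) (x : ℝ) :
    x ^ i * mulConvolution w K x =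
      ∫ t in posOrth r, (∏ l, w l (t l)) * (x ^ i * K (x / ∏ l, t l)) := by
  simp_rw [mulConvolution, ← integral_const_mul, mul_left_comm (x ^ i)]

lemma integrable_pow_mul_prod_mul_comp_div (hw : ∀ l, Measurable (w l)) (hK : Measurable K)
    (hwi : ∀ l, IntegrableOn (fun t => t ^ (i + 1) * w l t) (Set.Ioi 0))
    (hKi : IntegrableOn (fun s => s ^ i * K s) (Set.Ioi 0)) :
    Integrable (fun q : (Fin r → ℝ) × ℝ => (∏ l, w l (q.1 l)) * (q.2 ^ i * K (q.2 / ∏ l, q.1 l)))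
      ((volume.restrict (posOrth r)).prod (volume.restrict (Set.Ioi 0))) := by
  have hmem : ∀ᵐ t ∂volume.restrict (posOrth r), ∀ l, 0 < t l :=
    ae_restrict_mem (measurableSet_posOrth r)
  rw [integrable_prod_iff (by fun_prop)]
  constructor
  · filter_upwards [hmem] with t ht
    exact (integrableOn_Ioi_pow_mul_comp_div (Finset.prod_pos fun l _ => ht l) hKi).const_mul _
  · have hprod : Integrable (fun t : Fin r → ℝ => (∏ l, ‖t l ^ (i + 1) * w l (t l)‖) *
        ∫ s in Set.Ioi (0 : ℝ), s ^ i * ‖K s‖) (volume.restrict (posOrth r)) := by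
      rw [volume_restrict_posOrth]
      exact (Integrable.fintype_prod fun l => (hwi l).norm).mul_const _
    refine hprod.congr ?_
    filter_upwards [hmem] with t ht
    have hT : 0 < ∏ l, t l := Finset.prod_pos fun l _ => ht l
    have hnorm : ∀ x ∈ Set.Ioi (0 : ℝ),
        ‖(∏ l, w l (t l)) * (x ^ i * K (x / ∏ l, t l))‖ =
          (∏ l, ‖w l (t l)‖) * (x ^ i * ‖K (x / ∏ l, t l)‖) := fun x hx => by
      rw [norm_mul, norm_mul, norm_prod, norm_pow, Real.norm_of_nonneg (le_of_lt hx)]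
    calc (∏ l, ‖t l ^ (i + 1) * w l (t l)‖) * ∫ s in Set.Ioi (0 : ℝ), s ^ i * ‖K s‖
        = (∏ l, ‖w l (t l)‖) * ((∏ l, t l) ^ (i + 1) * ∫ s in Set.Ioi (0 : ℝ), s ^ i * ‖K s‖) := by
          simp_rw [norm_mul, norm_pow, Real.norm_of_nonneg (ht _).le, Finset.prod_mul_distrib,
            Finset.prod_pow]
          ring
      _ = ∫ x in Set.Ioi (0 : ℝ), ‖(∏ l, w l (t l)) * (x ^ i * K (x / ∏ l, t l))‖ := by
          rw [setIntegral_congr_fun measurableSet_Ioi hnorm, integral_const_mul,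
            integral_Ioi_pow_mul_comp_div (fun s => ‖K s‖) i hT]

theorem integrableOn_pow_mul_mulConvolution (hw : ∀ l, Measurable (w l)) (hK : Measurable K)
    (hwi : ∀ l, IntegrableOn (fun t => t ^ (i + 1) * w l t) (Set.Ioi 0))
    (hKi : IntegrableOn (fun s => s ^ i * K s) (Set.Ioi 0)) :
    IntegrableOn (fun x => x ^ i * mulConvolution w K x) (Set.Ioi 0) := by
  simp_rw [pow_mul_mulConvolution]
  exact (integrable_pow_mul_prod_mul_comp_div hw hK hwi hKi).integral_prod_right

theorem integral_pow_mul_mulConvolution (hw : ∀ l, Measurable (w l)) (hK : Measurable K)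
    (hwi : ∀ l, IntegrableOn (fun t => t ^ (i + 1) * w l t) (Set.Ioi 0))
    (hKi : IntegrableOn (fun s => s ^ i * K s) (Set.Ioi 0)) :
    ∫ x in Set.Ioi (0 : ℝ), x ^ i * mulConvolution w K x =
      (∏ l, ∫ t in Set.Ioi (0 : ℝ), t ^ (i + 1) * w l t) *
        ∫ s in Set.Ioi (0 : ℝ), s ^ i * K s := by
  have hswap := integral_integral_swap
    (f := fun (t : Fin r → ℝ) x => (∏ l, w l (t l)) * (x ^ i * K (x / ∏ l, t l)))
    (integrable_pow_mul_prod_mul_comp_div hw hK hwi hKi)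
  simp_rw [pow_mul_mulConvolution]
  rw [← hswap, ← integral_fintype_prod_eq_prod, ← volume_restrict_posOrth, ← integral_mul_const]
  refine setIntegral_congr_fun (measurableSet_posOrth r) fun t ht => ?_
  simp_rw [integral_const_mul]
  rw [integral_Ioi_pow_mul_comp_div K i (Finset.prod_pos fun l _ => ht l), ← mul_assoc,
    Finset.prod_mul_distrib, Finset.prod_pow, mul_comm (∏ l, w l (t l))]

end MultiplicativeConvolution

section Phi

/-- The function `Φ(v; y)` for `r = 0` and real `v`; the general `Φ` is its multiplicative
convolution with Gamma densities. -/
def Phi0R (ν0 : ℕ) (v y : ℝ) : ℝ :=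
  y ^ ν0 * Real.exp (-y) * hyp0F1R ((ν0 : ℝ) + 1) (-(v * y)) / Real.Gamma ((ν0 : ℝ) + 1)

lemma measurable_Phi0R (ν0 : ℕ) (v : ℝ) : Measurable (Phi0R ν0 v) := by
  unfold Phi0R hyp0F1R
  fun_prop

lemma PhiR_eq_mulConvolution (r ν0 : ℕ) (ν : Fin r → ℕ) (v : ℝ) :
    PhiR r ν0 ν v =
      mulConvolution (fun l t => t ^ ((ν l : ℝ) - 1) * Real.exp (-t)) (Phi0R ν0 v) := by
  ext y
  rw [PhiR, mulConvolution, ← integral_const_mul]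
  congr 1 with t
  rw [Phi0R]
  ring

lemma pow_mul_Phi0R (ν0 i : ℕ) (v y : ℝ) :
    y ^ i * Phi0R ν0 v y =
      ∑' k : ℕ, (-v) ^ k / (k ! * (ν0 + k)!) * (y ^ (ν0 + i + k) * Real.exp (-y)) := by
  rw [Phi0R, hyp0F1R, mul_div_assoc, ← tsum_div_const, ← tsum_mul_left, ← tsum_mul_left]
  refine tsum_congr fun k => ?_
  have hΓ : Real.Gamma ((ν0 : ℝ) + 1) ≠ 0 := (Real.Gamma_pos_of_pos (by positivity)).ne'
  rw [Gamma_natCast_add_one_add, neg_mul_eq_neg_mul, mul_pow]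
  field_simp
  ring

lemma norm_Phi0R_term_le (ν0 i k : ℕ) (v : ℝ) {y : ℝ} (hy : 0 < y) :
    ‖(-v) ^ k / (k ! * (ν0 + k)!) * (y ^ (ν0 + i + k) * Real.exp (-y))‖ ≤
      (2 * |v|) ^ k / k ! * (y ^ (ν0 + i) * Real.exp (-(2⁻¹ * y))) := by
  have hfac : (k ! : ℝ) ≤ (ν0 + k)! := mod_cast Nat.factorial_le (Nat.le_add_left k ν0)
  have hpow := pow_le_factorial_mul_exp two_pos hy.le k
  calc ‖(-v) ^ k / (k ! * (ν0 + k)!) * (y ^ (ν0 + i + k) * Real.exp (-y))‖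
      = |v| ^ k / (k ! * (ν0 + k)!) * (y ^ (ν0 + i) * y ^ k * Real.exp (-y)) := by
        rw [norm_mul, norm_div, norm_pow, norm_neg, Real.norm_eq_abs v,
          Real.norm_of_nonneg (r := (k ! * (ν0 + k)! : ℝ)) (by positivity),
          Real.norm_of_nonneg (by positivity), pow_add y]
    _ ≤ |v| ^ k / (k ! * k !) *
          (y ^ (ν0 + i) * (2 ^ k * k ! * Real.exp (y / 2)) * Real.exp (-y)) := by gcongr
    _ = _ := by
        rw [← exp_neg_mul_exp_half, mul_pow]
        field_simp

lemma integrableOn_pow_mul_Phi0R (ν0 i : ℕ) (v : ℝ) :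
    IntegrableOn (fun y => y ^ i * Phi0R ν0 v y) (Set.Ioi 0) := by
  simp_rw [pow_mul_Phi0R]
  exact integrable_tsum_of_norm_le_mul (fun k => by fun_prop)
    (fun k => (ae_restrict_mem measurableSet_Ioi).mono fun y hy => norm_Phi0R_term_le ν0 i k v hy)
    (Real.summable_pow_div_factorial _) (integrableOn_pow_mul_exp_neg_mul _ (by norm_num))

lemma hasSum_integral_pow_mul_Phi0R (ν0 i : ℕ) (v : ℝ) :
    HasSum (fun m => (-v) ^ m / m ! * (i ! * (ν0 + m + i).choose (ν0 + m)))
      (∫ y in Set.Ioi (0 : ℝ), y ^ i * Phi0R ν0 v y) := by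
  simp_rw [pow_mul_Phi0R]
  have h := hasSum_integral_of_norm_le_mul
    (F := fun k y => (-v) ^ k / (k ! * (ν0 + k)!) * (y ^ (ν0 + i + k) * Real.exp (-y)))
    (fun k => by fun_prop)
    (fun k => (ae_restrict_mem measurableSet_Ioi).mono fun y hy => norm_Phi0R_term_le ν0 i k v hy)
    (Real.summable_pow_div_factorial _) (integrableOn_pow_mul_exp_neg_mul _ (by norm_num))
  refine h.congr_fun fun m => ?_
  rw [integral_const_mul, integral_pow_mul_exp_neg, Nat.add_right_comm, ← factorial_add_add_div]
  field_simp

/-- The moment `∏ l, Γ(ν l + 1 + k)` of the product of independent Gamma variables. -/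
def gammaMoment {r : ℕ} (ν : Fin r → ℕ) (k : ℕ) : ℝ := ∏ l, ((ν l + k)! : ℝ)

lemma one_le_gammaMoment {r : ℕ} (ν : Fin r → ℕ) (k : ℕ) : 1 ≤ gammaMoment ν k :=
  Finset.one_le_prod fun l _ => mod_cast Nat.factorial_pos (ν l + k)

lemma gammaMoment_ne_zero {r : ℕ} (ν : Fin r → ℕ) (k : ℕ) : gammaMoment ν k ≠ 0 :=
  (zero_lt_one.trans_le (one_le_gammaMoment ν k)).ne'

lemma pow_succ_mul_gammaDensity (n i : ℕ) {t : ℝ} (ht : 0 < t) :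
    t ^ (i + 1) * (t ^ ((n : ℝ) - 1) * Real.exp (-t)) = t ^ (n + i) * Real.exp (-t) := by
  rw [Real.rpow_sub_one ht.ne', Real.rpow_natCast]
  field_simp
  ring

lemma integrableOn_pow_succ_mul_gammaDensity (n i : ℕ) :
    IntegrableOn (fun t : ℝ => t ^ (i + 1) * (t ^ ((n : ℝ) - 1) * Real.exp (-t))) (Set.Ioi 0) := by
  refine IntegrableOn.congr_fun ?_ (fun t ht => (pow_succ_mul_gammaDensity n i ht).symm)
    measurableSet_Ioi
  simpa only [one_mul] using integrableOn_pow_mul_exp_neg_mul (n + i) one_pos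

lemma integral_pow_succ_mul_gammaDensity (n i : ℕ) :
    ∫ t in Set.Ioi (0 : ℝ), t ^ (i + 1) * (t ^ ((n : ℝ) - 1) * Real.exp (-t)) = (n + i)! := by
  rw [setIntegral_congr_fun measurableSet_Ioi fun t ht => pow_succ_mul_gammaDensity n i ht,
    integral_pow_mul_exp_neg]

variable {r : ℕ} (ν0 : ℕ) (ν : Fin r → ℕ)

lemma integrableOn_pow_mul_PhiR (v : ℝ) (i : ℕ) :
    IntegrableOn (fun x => x ^ i * PhiR r ν0 ν v x) (Set.Ioi 0) := by
  rw [PhiR_eq_mulConvolution]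
  exact integrableOn_pow_mul_mulConvolution (fun l => by fun_prop) (measurable_Phi0R ν0 v)
    (fun l => integrableOn_pow_succ_mul_gammaDensity (ν l) i) (integrableOn_pow_mul_Phi0R ν0 i v)

lemma integral_pow_mul_PhiR (v : ℝ) (i : ℕ) :
    ∫ x in Set.Ioi (0 : ℝ), x ^ i * PhiR r ν0 ν v x =
      gammaMoment ν i * ∫ y in Set.Ioi (0 : ℝ), y ^ i * Phi0R ν0 v y := by
  rw [PhiR_eq_mulConvolution, integral_pow_mul_mulConvolution (fun l => by fun_prop)
    (measurable_Phi0R ν0 v) (fun l => integrableOn_pow_succ_mul_gammaDensity (ν l) i)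
    (integrableOn_pow_mul_Phi0R ν0 i v)]
  simp_rw [integral_pow_succ_mul_gammaDensity, gammaMoment]

end Phi

section Psi

lemma poch_neg_natCast_div_factorial (k j : ℕ) :
    poch (-(k : ℝ)) j / j ! = (-1) ^ j * k.choose j := by
  have h : poch (-(k : ℝ)) j = (-1) ^ j * k.descFactorial j := by
    rw [← descPochhammer_eval_eq_descFactorial, descPochhammer_eval_eq_prod_range]
    simp_rw [poch, neg_add_eq_sub, ← neg_sub (k : ℝ), Finset.prod_neg, Finset.card_range]
  rw [h, Nat.descFactorial_eq_factorial_mul_choose]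
  push_cast
  field_simp

lemma poch_natCast_add_one (v j : ℕ) : poch ((v : ℝ) + 1) j = (v + j)! / v ! := by
  rw [← Nat.factorial_mul_ascFactorial, Nat.ascFactorial_eq_prod_range, poch]
  push_cast
  field_simp

lemma hyp1F1T_natCast_add_one (k v : ℕ) (u : ℝ) :
    hyp1F1T k ((v : ℝ) + 1) u =
      ∑ j ∈ Finset.range (k + 1), (k.choose j : ℝ) * ((-1) ^ j * (v ! / (v + j)!)) * u ^ j := by
  refine Finset.sum_congr rfl fun j _ => ?_
  rw [mul_comm (poch _ j), ← div_div, poch_neg_natCast_div_factorial, poch_natCast_add_one]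
  field_simp

lemma abs_hyp1F1T_le (k v : ℕ) {u : ℝ} (hu : 0 ≤ u) :
    |hyp1F1T k ((v : ℝ) + 1) u| ≤ 3 ^ k * Real.exp (u / 2) := by
  have hterm (j : ℕ) : |(k.choose j : ℝ) * ((-1) ^ j * (v ! / (v + j)!)) * u ^ j| ≤
      2 ^ j * k.choose j * Real.exp (u / 2) := by
    have hfac : (v ! * j ! : ℝ) ≤ (v + j)! := mod_cast
      Nat.le_of_dvd (Nat.factorial_pos _) (Nat.factorial_mul_factorial_dvd_factorial_add v j)
    calc |(k.choose j : ℝ) * ((-1) ^ j * (v ! / (v + j)!)) * u ^ j|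
        = k.choose j * (v ! / (v + j)!) * u ^ j := by
          simp [abs_mul, abs_div, abs_of_nonneg hu]
      _ ≤ k.choose j * (v ! / (v ! * j !)) * (2 ^ j * j ! * Real.exp (u / 2)) := by
          gcongr
          exact pow_le_factorial_mul_exp two_pos hu j
      _ = 2 ^ j * k.choose j * Real.exp (u / 2) := by field_simp
  have hbinom : (3 : ℝ) ^ k = ∑ j ∈ Finset.range (k + 1), 2 ^ j * (k.choose j : ℝ) := by
    rw [show (3 : ℝ) = 2 + 1 by norm_num, add_pow]
    simp
  rw [hyp1F1T_natCast_add_one, hbinom, Finset.sum_mul]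
  exact (Finset.abs_sum_le_sum_abs _ _).trans (Finset.sum_le_sum fun j _ => hterm j)

lemma integral_pow_mul_exp_neg_mul_hyp1F1T (v p k : ℕ) :
    ∫ u in Set.Ioi (0 : ℝ), u ^ (v + p) * Real.exp (-u) * hyp1F1T k ((v : ℝ) + 1) u =
      v ! * (p ! * ((-1) ^ k * (v + p).choose (v + k))) := by
  have hint (j : ℕ) : IntegrableOn (fun u : ℝ => u ^ (v + p + j) * Real.exp (-u)) (Set.Ioi 0) := by
    simpa only [one_mul] using integrableOn_pow_mul_exp_neg_mul (v + p + j) one_pos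
  have hexpand (u : ℝ) : u ^ (v + p) * Real.exp (-u) * hyp1F1T k ((v : ℝ) + 1) u =
      ∑ j ∈ Finset.range (k + 1), (k.choose j : ℝ) * ((-1) ^ j * (v ! / (v + j)!)) *
        (u ^ (v + p + j) * Real.exp (-u)) := by
    rw [hyp1F1T_natCast_add_one, Finset.mul_sum]
    exact Finset.sum_congr rfl fun j _ => by ring
  simp_rw [hexpand]
  rw [integral_finsetSum _ fun j _ => (hint j).const_mul _,
    ← sum_choose_mul_neg_one_pow_mul_choose_add k (v + p) v, Finset.mul_sum, Finset.mul_sum]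
  refine Finset.sum_congr rfl fun j _ => ?_
  rw [integral_const_mul, integral_pow_mul_exp_neg]
  linear_combination (v ! * k.choose j * (-1) ^ j) * factorial_add_add_div v p j

variable {r : ℕ} (ν0 : ℕ) (ν : Fin r → ℕ)

lemma pow_mul_exp_neg_mul_Psi (p : ℕ) (u x : ℝ) :
    u ^ (ν0 + p) * Real.exp (-u) * Psi r ν0 ν u x =
      ∑' k : ℕ, x ^ k / (k ! * (ν0 ! * gammaMoment ν k)) *
        (u ^ (ν0 + p) * Real.exp (-u) * hyp1F1T k ((ν0 : ℝ) + 1) u) := by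
  rw [Psi, ← tsum_mul_left, ← tsum_mul_left]
  refine tsum_congr fun k => ?_
  simp_rw [Gamma_natCast_add_one_add, Real.Gamma_nat_eq_factorial, one_div, Finset.prod_inv_distrib,
    gammaMoment]
  field_simp

lemma norm_Psi_term_le (p k : ℕ) (x : ℝ) {u : ℝ} (hu : 0 < u) :
    ‖x ^ k / (k ! * (ν0 ! * gammaMoment ν k)) *
        (u ^ (ν0 + p) * Real.exp (-u) * hyp1F1T k ((ν0 : ℝ) + 1) u)‖ ≤
      (3 * |x|) ^ k / k ! * (u ^ (ν0 + p) * Real.exp (-(2⁻¹ * u))) := by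
  have hone : 1 ≤ (ν0 ! : ℝ) * gammaMoment ν k :=
    one_le_mul_of_one_le_of_one_le (mod_cast Nat.factorial_pos ν0) (one_le_gammaMoment ν k)
  have hyp := abs_hyp1F1T_le k ν0 hu.le
  calc ‖x ^ k / (k ! * (ν0 ! * gammaMoment ν k)) *
        (u ^ (ν0 + p) * Real.exp (-u) * hyp1F1T k ((ν0 : ℝ) + 1) u)‖
      = |x| ^ k / (k ! * (ν0 ! * gammaMoment ν k)) *
          (u ^ (ν0 + p) * Real.exp (-u) * |hyp1F1T k ((ν0 : ℝ) + 1) u|) := by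
        rw [norm_mul, norm_div, norm_pow, norm_mul (u ^ _ * _), Real.norm_eq_abs x,
          Real.norm_of_nonneg (r := (k ! * (ν0 ! * gammaMoment ν k) : ℝ)) (by positivity),
          Real.norm_of_nonneg (r := u ^ _ * _) (by positivity), Real.norm_eq_abs]
    _ ≤ |x| ^ k / (k ! * 1) *
          (u ^ (ν0 + p) * Real.exp (-u) * (3 ^ k * Real.exp (u / 2))) := by gcongr
    _ = _ := by
        rw [← exp_neg_mul_exp_half, mul_pow]
        ring

lemma integrableOn_pow_mul_exp_neg_mul_Psi (p : ℕ) (x : ℝ) :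
    IntegrableOn (fun u => u ^ (ν0 + p) * Real.exp (-u) * Psi r ν0 ν u x) (Set.Ioi 0) := by
  simp_rw [pow_mul_exp_neg_mul_Psi]
  exact integrable_tsum_of_norm_le_mul (fun k => by unfold hyp1F1T; fun_prop)
    (fun k => (ae_restrict_mem measurableSet_Ioi).mono fun u hu => norm_Psi_term_le ν0 ν p k x hu)
    (Real.summable_pow_div_factorial _) (integrableOn_pow_mul_exp_neg_mul _ (by norm_num))

lemma hasSum_integral_pow_mul_exp_neg_mul_Psi (p : ℕ) (x : ℝ) :
    HasSum (fun k => (-1) ^ k * p ! / k ! * (ν0 + p).choose (ν0 + k) / gammaMoment ν k * x ^ k)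
      (∫ u in Set.Ioi (0 : ℝ), u ^ (ν0 + p) * Real.exp (-u) * Psi r ν0 ν u x) := by
  simp_rw [pow_mul_exp_neg_mul_Psi]
  have h := hasSum_integral_of_norm_le_mul
    (F := fun k u => x ^ k / (k ! * (ν0 ! * gammaMoment ν k)) *
      (u ^ (ν0 + p) * Real.exp (-u) * hyp1F1T k ((ν0 : ℝ) + 1) u))
    (fun k => by unfold hyp1F1T; fun_prop)
    (fun k => (ae_restrict_mem measurableSet_Ioi).mono fun u hu => norm_Psi_term_le ν0 ν p k x hu)
    (Real.summable_pow_div_factorial _) (integrableOn_pow_mul_exp_neg_mul _ (by norm_num))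
  refine h.congr_fun fun k => ?_
  have hγ := gammaMoment_ne_zero ν k
  rw [integral_const_mul, integral_pow_mul_exp_neg_mul_hyp1F1T]
  field_simp

end Psi

section Duality

open Polynomial

variable {r : ℕ} (ν0 : ℕ) (ν : Fin r → ℕ)

/-- The moment `∫₀^∞ u ^ (ν0 + p) e⁻ᵘ Ψ(u; x) du`, as a polynomial in `x`. -/
def psiMoment (p : ℕ) : ℝ[X] :=
  ∑ k ∈ Finset.range (p + 1),
    C ((-1) ^ k * p ! / k ! * (ν0 + p).choose (ν0 + k) / gammaMoment ν k) * X ^ k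

/-- The integral transform `Q ↦ ∫₀^∞ u ^ ν0 e⁻ᵘ Ψ(u; x) Q(u) du` on polynomials. -/
def psiTransform (Q : ℝ[X]) : ℝ[X] := Q.sum fun p c => C c * psiMoment ν0 ν p

lemma integral_pow_mul_exp_neg_mul_Psi (p : ℕ) (x : ℝ) :
    ∫ u in Set.Ioi (0 : ℝ), u ^ (ν0 + p) * Real.exp (-u) * Psi r ν0 ν u x =
      (psiMoment ν0 ν p).eval x := by
  rw [← (hasSum_integral_pow_mul_exp_neg_mul_Psi ν0 ν p x).tsum_eq, psiMoment, eval_finsetSum,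
    tsum_eq_sum (s := Finset.range (p + 1)) fun k hk => ?_]
  · simp
  · have hpk : ν0 + p < ν0 + k := by
      rw [Finset.mem_range] at hk
      omega
    simp [Nat.choose_eq_zero_of_lt hpk]

theorem integral_pow_mul_exp_neg_mul_Psi_mul_eval (Q : ℝ[X]) (x : ℝ) :
    ∫ u in Set.Ioi (0 : ℝ), u ^ ν0 * Real.exp (-u) * Psi r ν0 ν u x * Q.eval u =
      (psiTransform ν0 ν Q).eval x := by
  have hexpand (u : ℝ) : u ^ ν0 * Real.exp (-u) * Psi r ν0 ν u x * Q.eval u =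
      ∑ p ∈ Q.support, Q.coeff p * (u ^ (ν0 + p) * Real.exp (-u) * Psi r ν0 ν u x) := by
    rw [eval_eq_sum, Polynomial.sum, Finset.mul_sum]
    exact Finset.sum_congr rfl fun p _ => by ring
  simp_rw [hexpand]
  rw [integral_finsetSum _ fun p _ => (integrableOn_pow_mul_exp_neg_mul_Psi ν0 ν p x).const_mul _]
  simp_rw [integral_const_mul, integral_pow_mul_exp_neg_mul_Psi, psiTransform, Polynomial.sum,
    eval_finsetSum, eval_mul, eval_C]

lemma natDegree_psiMoment_le (p : ℕ) : (psiMoment ν0 ν p).natDegree ≤ p :=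
  natDegree_sum_le_of_forall_le _ _ fun k hk =>
    (natDegree_C_mul_X_pow_le _ k).trans (Nat.lt_succ_iff.mp (Finset.mem_range.mp hk))

lemma coeff_psiMoment_self (p : ℕ) :
    (psiMoment ν0 ν p).coeff p = (-1) ^ p / gammaMoment ν p := by
  simp only [psiMoment, finsetSum_coeff, coeff_C_mul_X_pow]
  simp [Nat.factorial_ne_zero]

lemma natDegree_psiTransform_le (Q : ℝ[X]) : (psiTransform ν0 ν Q).natDegree ≤ Q.natDegree :=
  natDegree_sum_le_of_forall_le _ _ fun p hp =>
    (natDegree_C_mul_le _ _).trans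
      ((natDegree_psiMoment_le ν0 ν p).trans (le_natDegree_of_mem_supp p hp))

lemma coeff_psiTransform_natDegree (Q : ℝ[X]) :
    (psiTransform ν0 ν Q).coeff Q.natDegree =
      (-1) ^ Q.natDegree * Q.leadingCoeff / gammaMoment ν Q.natDegree := by
  rw [psiTransform, Polynomial.sum, finsetSum_coeff, Finset.sum_eq_single Q.natDegree]
  · rw [coeff_C_mul, coeff_psiMoment_self, coeff_natDegree]
    ring
  · intro p hp hne
    rw [coeff_C_mul, coeff_eq_zero_of_natDegree_lt ((natDegree_psiMoment_le ν0 ν p).trans_lt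
      (lt_of_le_of_ne (le_natDegree_of_mem_supp p hp) hne)), mul_zero]
  · intro hsupp
    rw [notMem_support_iff.mp hsupp, C_0, zero_mul, coeff_zero]

lemma integrableOn_eval_mul_PhiR (Q : ℝ[X]) (v : ℝ) :
    IntegrableOn (fun x => Q.eval x * PhiR r ν0 ν v x) (Set.Ioi 0) := by
  simp_rw [eval_eq_sum, Polynomial.sum, Finset.sum_mul, mul_assoc]
  exact integrable_finsetSum _ fun p _ => (integrableOn_pow_mul_PhiR ν0 ν v p).const_mul _

lemma integral_eval_psiMoment_mul_PhiR_eq_sum (p : ℕ) (v : ℝ) :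
    ∫ x in Set.Ioi (0 : ℝ), (psiMoment ν0 ν p).eval x * PhiR r ν0 ν v x =
      ∑ k ∈ Finset.range (p + 1), (-1) ^ k * p ! / k ! * (ν0 + p).choose (ν0 + k) *
        ∫ y in Set.Ioi (0 : ℝ), y ^ k * Phi0R ν0 v y := by
  simp_rw [psiMoment, eval_finsetSum, eval_mul, eval_C, eval_pow, eval_X, Finset.sum_mul,
    mul_assoc (_ / gammaMoment ν _)]
  rw [integral_finsetSum _ fun k _ => (integrableOn_pow_mul_PhiR ν0 ν v k).const_mul _]
  refine Finset.sum_congr rfl fun k _ => ?_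
  rw [integral_const_mul, integral_pow_mul_PhiR, ← mul_assoc,
    div_mul_cancel₀ _ (gammaMoment_ne_zero ν k)]

lemma integral_eval_psiMoment_mul_PhiR (p : ℕ) (v : ℝ) :
    ∫ x in Set.Ioi (0 : ℝ), (psiMoment ν0 ν p).eval x * PhiR r ν0 ν v x =
      Real.exp (-v) * v ^ p := by
  have hterm (m : ℕ) :
      ∑ k ∈ Finset.range (p + 1), (-1 : ℝ) ^ k * p ! / k ! * (ν0 + p).choose (ν0 + k) *
          ((-v) ^ m / m ! * (k ! * (ν0 + m + k).choose (ν0 + m))) =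
        (-1) ^ p * p ! * ((-v) ^ m / m ! * m.choose p) := by
    calc _ = p ! * ((-v) ^ m / m !) * ∑ k ∈ Finset.range (p + 1),
          (-1 : ℝ) ^ k * ((ν0 + p).choose (ν0 + k) * (ν0 + m + k).choose (ν0 + m)) := by
          rw [Finset.mul_sum]
          exact Finset.sum_congr rfl fun k _ => by field_simp
      _ = _ := by
          rw [sum_neg_one_pow_mul_choose_mul_choose]
          ring
  have hseries := hasSum_sum fun k (_ : k ∈ Finset.range (p + 1)) =>
    (hasSum_integral_pow_mul_Phi0R ν0 k v).mul_left
      ((-1) ^ k * p ! / k ! * (ν0 + p).choose (ν0 + k) : ℝ)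
  simp_rw [hterm] at hseries
  calc _ = (-1) ^ p * p ! * (Real.exp (-v) * (-v) ^ p / p !) := by
        rw [integral_eval_psiMoment_mul_PhiR_eq_sum]
        exact hseries.unique ((hasSum_pow_div_factorial_mul_choose (-v) p).mul_left _)
    _ = Real.exp (-v) * ((-1) ^ p * (-v) ^ p) := by field_simp
    _ = Real.exp (-v) * v ^ p := by rw [← mul_pow, neg_one_mul, neg_neg]

theorem integral_eval_psiTransform_mul_PhiR (Q : ℝ[X]) (v : ℝ) :
    ∫ x in Set.Ioi (0 : ℝ), (psiTransform ν0 ν Q).eval x * PhiR r ν0 ν v x =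
      Real.exp (-v) * Q.eval v := by
  simp_rw [psiTransform, Polynomial.sum, eval_finsetSum, eval_mul, eval_C, Finset.sum_mul,
    mul_assoc]
  rw [integral_finsetSum _ fun p _ => (integrableOn_eval_mul_PhiR ν0 ν _ _).const_mul _]
  simp_rw [integral_const_mul, integral_eval_psiMoment_mul_PhiR, eval_eq_sum, Polynomial.sum,
    Finset.mul_sum, mul_left_comm]

end Duality

section AverageCharacteristicPolynomial

open Polynomial

variable {r : ℕ} (ν0 : ℕ) (ν : Fin r → ℕ)

/-- The monic multiple of `psiTransform ν0 ν Q`, for monic `Q`; with `Q = ∏ l, (X + C (a l))` it is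
the average characteristic polynomial of the product ensemble. -/
def monicPsiTransform (Q : ℝ[X]) : ℝ[X] :=
  C ((-1) ^ Q.natDegree * gammaMoment ν Q.natDegree) * psiTransform ν0 ν Q

variable {Q : ℝ[X]}

lemma coeff_monicPsiTransform_natDegree (hQ : Q.Monic) :
    (monicPsiTransform ν0 ν Q).coeff Q.natDegree = 1 := by
  rw [monicPsiTransform, coeff_C_mul, coeff_psiTransform_natDegree, hQ.leadingCoeff]
  have hγ := gammaMoment_ne_zero ν Q.natDegree
  field_simp
  rw [← pow_mul, mul_comm, pow_mul, neg_one_sq, one_pow]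

lemma natDegree_monicPsiTransform_le (Q : ℝ[X]) :
    (monicPsiTransform ν0 ν Q).natDegree ≤ Q.natDegree :=
  (natDegree_C_mul_le _ _).trans (natDegree_psiTransform_le ν0 ν Q)

lemma natDegree_monicPsiTransform (hQ : Q.Monic) :
    (monicPsiTransform ν0 ν Q).natDegree = Q.natDegree :=
  natDegree_eq_of_le_of_coeff_ne_zero (natDegree_monicPsiTransform_le ν0 ν Q)
    (by rw [coeff_monicPsiTransform_natDegree ν0 ν hQ]; exact one_ne_zero)

lemma monic_monicPsiTransform (hQ : Q.Monic) : (monicPsiTransform ν0 ν Q).Monic :=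
  monic_of_natDegree_le_of_coeff_eq_one _ (natDegree_monicPsiTransform_le ν0 ν Q)
    (coeff_monicPsiTransform_natDegree ν0 ν hQ)

lemma integral_eval_monicPsiTransform_mul_PhiR {v : ℝ} (hv : Q.IsRoot v) :
    ∫ x in Set.Ioi (0 : ℝ), (monicPsiTransform ν0 ν Q).eval x * PhiR r ν0 ν v x = 0 := by
  simp_rw [monicPsiTransform, eval_C_mul, mul_assoc (_ * gammaMoment _ _)]
  rw [integral_const_mul, integral_eval_psiTransform_mul_PhiR, hv.eq_zero, mul_zero, mul_zero]

lemma natDegree_prod_X_add_C {R ι : Type*} [CommSemiring R] [Nontrivial R] (s : Finset ι)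
    (f : ι → R) : (∏ i ∈ s, (X + C (f i))).natDegree = s.card := by
  simp [natDegree_prod_of_monic _ _ fun i _ => monic_X_add_C (f i)]

lemma eval_monicPsiTransform_prod_X_add_C {N : ℕ} (a : Fin N → ℝ) (x : ℝ) :
    (monicPsiTransform ν0 ν (∏ l, (X + C (a l)))).eval x =
      (-1) ^ N * (∏ l, Real.Gamma ((ν l : ℝ) + N + 1)) *
        ∫ u in Set.Ioi (0 : ℝ), u ^ ν0 * Real.exp (-u) * Psi r ν0 ν u x * ∏ l, (u + a l) := by
  have hΓ : gammaMoment ν N = ∏ l, Real.Gamma ((ν l : ℝ) + N + 1) :=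
    Finset.prod_congr rfl fun l _ => by rw [add_right_comm, Gamma_natCast_add_one_add]
  rw [monicPsiTransform, natDegree_prod_X_add_C, Finset.card_fin, eval_C_mul,
    ← integral_pow_mul_exp_neg_mul_Psi_mul_eval, hΓ]
  simp only [eval_prod, eval_add, eval_X, eval_C]

theorem integral_posOrth_prod_sub_mul_det_mul_det {N : ℕ} (a : Fin N → ℝ) (z : ℝ) :
    ∫ x in posOrth N, (∏ l, (z - x l)) * ((Matrix.of fun i j : Fin N => x j ^ (i : ℕ)).det *
        (Matrix.of fun i j : Fin N => PhiR r ν0 ν (-(a i)) (x j)).det) =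
      (N ! : ℝ) * ((monicPsiTransform ν0 ν (∏ l, (X + C (a l)))).eval z *
        (Matrix.of fun i j : Fin N =>
          ∫ x in Set.Ioi (0 : ℝ), x ^ (i : ℕ) * PhiR r ν0 ν (-(a j)) x).det) := by
  have hQ : (∏ l, (X + C (a l))).Monic :=
    monic_prod_of_monic _ _ fun l _ => monic_X_add_C (a l)
  have hroot (j : Fin N) : (∏ l, (X + C (a l))).IsRoot (-(a j)) := by
    rw [IsRoot, eval_prod]
    exact Finset.prod_eq_zero (Finset.mem_univ j) (by simp)
  rw [volume_restrict_posOrth]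
  exact integral_prod_sub_mul_det_mul_det (monic_monicPsiTransform ν0 ν hQ)
    ((natDegree_monicPsiTransform ν0 ν hQ).trans (by rw [natDegree_prod_X_add_C, Finset.card_fin]))
    (fun j => PhiR r ν0 ν (-(a j))) (fun k j => integrableOn_pow_mul_PhiR ν0 ν (-(a j)) k)
    (fun j => integral_eval_monicPsiTransform_mul_PhiR ν0 ν (hroot j)) z

end AverageCharacteristicPolynomial

theorem prop_2_6_iii_general (r ν0 N : ℕ) (ν : Fin r → ℕ) (a : Fin N → ℝ)
    (g : Matrix (Fin N) (Fin N) ℝ)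
    (hg : ∀ i j, g i j = ∫ x in Set.Ioi (0 : ℝ), x ^ (i : ℕ) * PhiR r ν0 ν (-(a j)) x)
    (hdet : g.det ≠ 0) (P : (Fin N → ℝ) → ℝ)
    (hP : ∀ x, P x = (1 / ((Nat.factorial N : ℝ) * g.det)) *
      (Matrix.of fun i j : Fin N => x j ^ (i : ℕ)).det *
      (Matrix.of fun i j : Fin N => PhiR r ν0 ν (-(a i)) (x j)).det) (x0 : ℝ) :
    ∫ x in {x : Fin N → ℝ | ∀ l, 0 < x l}, (∏ l, (x0 - x l)) * P x =
      (-1 : ℝ) ^ N * (∏ l, Real.Gamma ((ν l : ℝ) + N + 1)) *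
        ∫ u in Set.Ioi (0 : ℝ), u ^ ν0 * Real.exp (-u) * Psi r ν0 ν u x0 * ∏ l, (u + a l) := by
  have hfact : (N ! : ℝ) ≠ 0 := Nat.cast_ne_zero.mpr N.factorial_ne_zero
  have hgram : (Matrix.of fun i j : Fin N =>
      ∫ x in Set.Ioi (0 : ℝ), x ^ (i : ℕ) * PhiR r ν0 ν (-(a j)) x) = g :=
    Matrix.ext fun i j => (hg i j).symm
  rw [← eval_monicPsiTransform_prod_X_add_C]
  simp_rw [hP, mul_assoc, mul_left_comm _ (1 / _ : ℝ)]
  rw [integral_const_mul]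
  change _ * ∫ x in posOrth N, _ = _
  rw [integral_posOrth_prod_sub_mul_det_mul_det, hgram]
  field_simp

/-- **Proposition 2.6(iii)** (average characteristic polynomial for the product
ensemble). -/
theorem prop_2_6_iii (r ν0 N : ℕ) (hN : 0 < N) (ν : Fin r → ℕ) (a : Fin N → ℝ)
    (ha : ∀ j, 0 < a j) (hdist : Function.Injective a)
    (g : Matrix (Fin N) (Fin N) ℝ)
    (hg : ∀ i j, g i j = ∫ x in Set.Ioi (0 : ℝ), x ^ (i : ℕ) * PhiR r ν0 ν (-(a j)) x)
    (hdet : g.det ≠ 0)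
    (P : (Fin N → ℝ) → ℝ)
    (hP : ∀ x, P x = (1 / ((Nat.factorial N : ℝ) * g.det)) *
      (Matrix.of fun i j : Fin N => x j ^ (i : ℕ)).det *
      (Matrix.of fun i j : Fin N => PhiR r ν0 ν (-(a i)) (x j)).det)
    (x0 : ℝ) :
    ∫ x in {x : Fin N → ℝ | ∀ l, 0 < x l}, (∏ l, (x0 - x l)) * P x =
      (-1 : ℝ) ^ N * (∏ l, Real.Gamma ((ν l : ℝ) + N + 1)) *
        ∫ u in Set.Ioi (0 : ℝ),
          u ^ ν0 * Real.exp (-u) * Psi r ν0 ν u x0 * ∏ l, (u + a l) :=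
  prop_2_6_iii_general r ν0 N ν a g hg hdet P hP x0

end
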